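/- arXiv:1109.2229 — 2 statements merged into one kernel-verified Lean document; each statement's English description precedes it below -/
import Mathlib

section
/- There is a universal constant c > 0 with the following property. Fix integers d ≥ 1 and reals γ, α, β, ε ∈ (0, 1/2), and set T = ⌈320 γ^{−2} ln(8/α)⌉ and m = ⌈(16/α²) · d · (ln(4√d/γ) + ln(1/β))⌉. Then for every n ≥ (c · m / ε) · (8√T/γ)^T · ln(2m(8√T/γ)^T / β), there exist a positive integer k, an ε-differentially private mechanism A mapping databases of n unit vectors in ℝ^d to points of ℝ^k, and a function Eval : ℝ^k × {y ∈ ℝ^d : ‖y‖₂ = 1} → ℝ, such that for every database D of n unit vectors in ℝ^d, with probability at least 1 − β over o = A(D): every unit vector y ∈ ℝ^d whose halfspace query f_y has margin γ with respect to D satisfies |Eval(o, y) − f_y(D)| ≤ α. -/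
attribute [local instance] Classical.propDecidable

open MeasureTheory RealInnerProductSpace

/-- The halfspace query `f_y` evaluated on a database `D` (a multiset of vectors in ℝ^d):
the fraction of elements `x` of `D` with `⟨x, y⟩ > 0`. -/
noncomputable def hquery {d : ℕ} (y : EuclideanSpace ℝ (Fin d))
    (D : Multiset (EuclideanSpace ℝ (Fin d))) : ℝ :=
  ((D.filter (fun x => 0 < ⟪x, y⟫)).card : ℝ) / (D.card : ℝ)

/-- Two databases (multisets) are neighbors if one is obtained from the other by replacing
a single element. -/
def Neighbor {X : Type*} (D D' : Multiset X) : Prop :=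
  ∃ (D₀ : Multiset X) (x y : X), D = x ::ₘ D₀ ∧ D' = y ::ₘ D₀

/-!
Toss `2T` coins showing heads with probability `(1 + ⟪x, y⟫) / 2`. Expanding over all outcomes, the
probability of a majority of heads is the inner product of a tensor power of `x` with a vector of
norm at most `4 ^ T` depending only on `y`. At margin `γ` it is within `exp (-γ² T)` of the
halfspace query, so every query of margin `γ` is answered by the mean of the tensor powers over the
database. By Maurey's sampling argument that mean is close to the mean over few points of a net of
the unit ball. The exponential mechanism selects such a synthetic database, at a cost logarithmic in
the number of candidates.
-/

section Privacy

variable {X Ω Ψ : Type*} [MeasurableSpace Ω] [MeasurableSpace Ψ]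

/-- `ε`-differential privacy of a mechanism on a class `𝒟` of databases. The bound on the
probabilities of all measurable events is expressed as an inequality of measures. -/
def DifferentiallyPrivate (ε : ℝ) (𝒟 : Set (Multiset X)) (A : Multiset X → Measure Ω) : Prop :=
  ∀ D ∈ 𝒟, ∀ D' ∈ 𝒟, Neighbor D D' → A D ≤ ENNReal.ofReal (Real.exp ε) • A D'

theorem DifferentiallyPrivate.mono {ε : ℝ} {𝒟 𝒟' : Set (Multiset X)} {A : Multiset X → Measure Ω}
    (hA : DifferentiallyPrivate ε 𝒟 A) (h : 𝒟' ⊆ 𝒟) : DifferentiallyPrivate ε 𝒟' A :=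
  fun D hD D' hD' => hA D (h hD) D' (h hD')

theorem DifferentiallyPrivate.map {ε : ℝ} {𝒟 : Set (Multiset X)} {A : Multiset X → Measure Ω}
    (hA : DifferentiallyPrivate ε 𝒟 A) {f : Ω → Ψ} (hf : Measurable f) :
    DifferentiallyPrivate ε 𝒟 fun D => (A D).map f := by
  intro D hD D' hD' hDD'
  rw [← Measure.map_smul]
  exact Measure.map_mono (hA D hD D' hD' hDD') hf

theorem tilted_le_smul_tilted {μ : Measure Ω} {f g : Ω → ℝ} {Δ : ℝ}
    (hf : Integrable (fun x => Real.exp (f x)) μ) (hg : Integrable (fun x => Real.exp (g x)) μ)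
    (hfg : ∀ x, |f x - g x| ≤ Δ) :
    μ.tilted f ≤ ENNReal.ofReal (Real.exp (2 * Δ)) • μ.tilted g := by
  rcases eq_zero_or_neZero μ with rfl | _
  · simp
  have exp_le : ∀ x, Real.exp (f x) ≤ Real.exp Δ * Real.exp (g x) := fun x => by
    rw [← Real.exp_add, Real.exp_le_exp]
    linarith [(abs_le.1 (hfg x)).2]
  have exp_ge : ∀ x, Real.exp (g x) ≤ Real.exp Δ * Real.exp (f x) := fun x => by
    rw [← Real.exp_add, Real.exp_le_exp]
    linarith [(abs_le.1 (hfg x)).1]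
  have integral_ge : ∫ x, Real.exp (g x) ∂μ ≤ Real.exp Δ * ∫ x, Real.exp (f x) ∂μ := by
    rw [← integral_const_mul]
    exact integral_mono hg (hf.const_mul _) exp_ge
  rw [Measure.tilted, Measure.tilted, ← withDensity_smul' _ _ ENNReal.ofReal_ne_top]
  refine withDensity_mono (.of_forall fun x => ?_)
  rw [Pi.smul_apply, smul_eq_mul, ← ENNReal.ofReal_mul (Real.exp_pos _).le]
  refine ENNReal.ofReal_le_ofReal ?_
  rw [← mul_div_assoc, div_le_div_iff₀ (integral_exp_pos hf) (integral_exp_pos hg)]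
  calc Real.exp (f x) * ∫ x, Real.exp (g x) ∂μ
      ≤ (Real.exp Δ * Real.exp (g x)) * (Real.exp Δ * ∫ x, Real.exp (f x) ∂μ) := by
        gcongr
        exact exp_le x
    _ = Real.exp (2 * Δ) * Real.exp (g x) * ∫ x, Real.exp (f x) ∂μ := by
        rw [two_mul, Real.exp_add]
        ring

theorem count_tilted_setOf_lt_le [Fintype Ω] [MeasurableSingletonClass Ω] (f : Ω → ℝ) (x₀ : Ω)
    (δ : ℝ) :
    (Measure.count.tilted f) {x | f x < f x₀ - δ}
      ≤ ENNReal.ofReal (Fintype.card Ω * Real.exp (-δ)) := by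
  have density_le : ∀ x, f x < f x₀ - δ →
      Real.exp (f x) / ∫ z, Real.exp (f z) ∂Measure.count ≤ Real.exp (-δ) := fun x hx => by
    have weight_le : Real.exp (f x₀) ≤ ∑ z, Real.exp (f z) :=
      Finset.single_le_sum (f := fun z => Real.exp (f z)) (fun z _ => (Real.exp_pos _).le)
        (Finset.mem_univ x₀)
    rw [integral_count, div_le_iff₀ ((Real.exp_pos _).trans_le weight_le)]
    calc Real.exp (f x) ≤ Real.exp (-δ) * Real.exp (f x₀) := by
          rw [← Real.exp_add, Real.exp_le_exp]
          linarith
      _ ≤ Real.exp (-δ) * ∑ z, Real.exp (f z) := by gcongr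
  calc (Measure.count.tilted f) {x | f x < f x₀ - δ}
      ≤ ∫⁻ _ in {x | f x < f x₀ - δ}, ENNReal.ofReal (Real.exp (-δ)) ∂Measure.count := by
        rw [tilted_apply]
        exact setLIntegral_mono measurable_const
          fun x hx => ENNReal.ofReal_le_ofReal (density_le x hx)
    _ ≤ ∫⁻ _, ENNReal.ofReal (Real.exp (-δ)) ∂(Measure.count : Measure Ω) :=
        setLIntegral_le_lintegral _ _
    _ = ENNReal.ofReal (Fintype.card Ω * Real.exp (-δ)) := by
        rw [lintegral_const, Measure.count_univ, ENNReal.ofReal_mul (Nat.cast_nonneg _),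
          ENNReal.ofReal_natCast, mul_comm, ENat.card_eq_coe_fintype_card, ENat.toENNReal_coe]

end Privacy

section EmpiricalMean

variable {X H : Type*} [NormedAddCommGroup H] [InnerProductSpace ℝ H]

/-- The mean of a feature map `φ` over a database, the statistic that is released privately.
It is `0` for the empty database. -/
noncomputable def empMean (φ : X → H) (D : Multiset X) : H :=
  (D.card : ℝ)⁻¹ • (D.map φ).sum

theorem empMean_map {Y : Type*} (φ : X → H) (f : Y → X) (D : Multiset Y) :
    empMean φ (D.map f) = empMean (φ ∘ f) D := by
  rw [empMean, empMean, Multiset.card_map, Multiset.map_map]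

theorem inner_empMean (φ : X → H) (D : Multiset X) (w : H) :
    ⟪empMean φ D, w⟫ = empMean (fun x => ⟪φ x, w⟫) D := by
  have inner_sum : ⟪(D.map φ).sum, w⟫ = (D.map fun x => ⟪φ x, w⟫).sum := by
    simp only [real_inner_comm w]
    exact (map_multiset_sum (innerSL ℝ w) _).trans (by rw [Multiset.map_map]; rfl)
  rw [empMean, empMean, real_inner_smul_left, inner_sum, smul_eq_mul]

theorem norm_empMean_le {φ : X → H} {D : Multiset X} {r : ℝ} (hr : 0 ≤ r)
    (h : ∀ x ∈ D, ‖φ x‖ ≤ r) : ‖empMean φ D‖ ≤ r := by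
  rcases eq_or_ne D 0 with rfl | hD
  · simpa [empMean] using hr
  have hcard : (0 : ℝ) < D.card := by exact_mod_cast Multiset.card_pos.2 hD
  have sum_le : ‖(D.map φ).sum‖ ≤ D.card * r := by
    calc ‖(D.map φ).sum‖ ≤ (D.map fun x => ‖φ x‖).sum := by
          simpa only [Multiset.map_map, Function.comp_def] using norm_multiset_sum_le (D.map φ)
      _ ≤ D.card * r := by
          simpa using Multiset.sum_le_card_nsmul (D.map fun x => ‖φ x‖) r (by simpa using h)
  rwa [empMean, norm_smul, norm_inv, Real.norm_natCast, inv_mul_le_iff₀ hcard]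

theorem empMean_sub (φ ψ : X → H) (D : Multiset X) :
    empMean (fun x => φ x - ψ x) D = empMean φ D - empMean ψ D := by
  rw [empMean, Multiset.sum_map_sub, smul_sub, empMean, empMean]

theorem empMean_const {D : Multiset X} (hD : D ≠ 0) (v : H) : empMean (fun _ => v) D = v := by
  have hcard : (D.card : ℝ) ≠ 0 := by exact_mod_cast (Multiset.card_pos.2 hD).ne'
  rw [empMean, Multiset.map_const', Multiset.sum_replicate, ← Nat.cast_smul_eq_nsmul ℝ,
    inv_smul_smul₀ hcard]

theorem norm_empMean_sub_le_of_neighbor {φ : X → H} {D D' : Multiset X} {r : ℝ}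
    (hD : ∀ x ∈ D, ‖φ x‖ ≤ r) (hD' : ∀ x ∈ D', ‖φ x‖ ≤ r) (h : Neighbor D D') :
    ‖empMean φ D - empMean φ D'‖ ≤ 2 * r / D.card := by
  obtain ⟨D₀, x, y, rfl, rfl⟩ := h
  have hx : ‖φ x‖ ≤ r := hD x (Multiset.mem_cons_self _ _)
  have hy : ‖φ y‖ ≤ r := hD' y (Multiset.mem_cons_self _ _)
  simp only [empMean, Multiset.map_cons, Multiset.sum_cons, Multiset.card_cons]
  rw [← smul_sub, add_sub_add_right_eq_sub, norm_smul, norm_inv, Real.norm_natCast, div_eq_inv_mul]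
  gcongr
  linarith [norm_sub_le (φ x) (φ y)]

theorem exists_inner_nonpos_of_sum_eq_zero {v : X → H} {D : Multiset X} (hD : D ≠ 0)
    (hsum : (D.map v).sum = 0) (u : H) : ∃ x ∈ D, ⟪v x, u⟫ ≤ 0 := by
  by_contra! hpos
  have : 0 < (D.map fun x => ⟪v x, u⟫).sum := by
    simpa using Multiset.sum_lt_sum_of_nonempty (f := fun _ => (0 : ℝ)) hD hpos
  have mean_eq : empMean (fun x => ⟪v x, u⟫) D = 0 := by
    rw [← inner_empMean, empMean, hsum, smul_zero, inner_zero_left]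
  have hcard : (0 : ℝ) < D.card := by exact_mod_cast Multiset.card_pos.2 hD
  rw [empMean, smul_eq_mul] at mean_eq
  exact (mul_pos (inv_pos.2 hcard) this).ne' mean_eq

/- Derandomized Maurey argument: a greedily chosen vector making a nonacute angle with the current
partial sum adds at most `r ^ 2` to its squared norm. -/
theorem exists_norm_sum_sq_le {v : X → H} {D : Multiset X} {r : ℝ} (hD : D ≠ 0)
    (hsum : (D.map v).sum = 0) (hv : ∀ x ∈ D, ‖v x‖ ≤ r) (s : ℕ) :
    ∃ f : Fin s → X, (∀ j, f j ∈ D) ∧ ‖∑ j, v (f j)‖ ^ 2 ≤ s * r ^ 2 := by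
  induction s with
  | zero => exact ⟨Fin.elim0, fun j => j.elim0, by simp⟩
  | succ s ih =>
    obtain ⟨f, hfD, hf⟩ := ih
    obtain ⟨x, hxD, hx⟩ := exists_inner_nonpos_of_sum_eq_zero hD hsum (∑ j, v (f j))
    refine ⟨Fin.cons x f, Fin.cases hxD hfD, ?_⟩
    have hvx : ‖v x‖ ^ 2 ≤ r ^ 2 := pow_le_pow_left₀ (norm_nonneg _) (hv x hxD) 2
    simp only [Fin.sum_univ_succ, Fin.cons_zero, Fin.cons_succ]
    rw [norm_add_sq_real]
    push_cast
    linarith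

theorem exists_sample_norm_empMean_sub_le {φ : X → H} {D : Multiset X} {r : ℝ} (hD : D ≠ 0)
    (hφ : ∀ x ∈ D, ‖φ x‖ ≤ r) {P : ℕ} (hP : 0 < P) :
    ∃ f : Fin (P ^ 2) → X, (∀ j, f j ∈ D) ∧
      ‖empMean φ (Finset.univ.val.map f) - empMean φ D‖ ≤ 2 * r / P := by
  have hr : 0 ≤ r := by
    obtain ⟨x, hx⟩ := Multiset.exists_mem_of_ne_zero hD
    exact (norm_nonneg _).trans (hφ x hx)
  set μ := empMean φ D with hμ
  have hcard : (D.card : ℝ) ≠ 0 := by exact_mod_cast (Multiset.card_pos.2 hD).ne'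
  have centered : (D.map fun x => φ x - μ).sum = 0 := by
    have : empMean (fun x => φ x - μ) D = 0 := by rw [empMean_sub, empMean_const hD, ← hμ, sub_self]
    exact (smul_eq_zero.1 this).resolve_left (inv_ne_zero hcard)
  have bounded : ∀ x ∈ D, ‖φ x - μ‖ ≤ 2 * r := fun x hx => by
    linarith [norm_sub_le (φ x) μ, hφ x hx, norm_empMean_le hr hφ]
  obtain ⟨f, hfD, hf⟩ := exists_norm_sum_sq_le hD centered bounded (P ^ 2)
  refine ⟨f, hfD, ?_⟩
  have sample_ne : Finset.univ.val.map f ≠ 0 := by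
    rw [← Multiset.card_pos, Multiset.card_map, Finset.card_val, Finset.card_fin]
    positivity
  have sum_le : ‖∑ j, (φ (f j) - μ)‖ ≤ P * (2 * r) := by
    refine le_of_sq_le_sq (hf.trans_eq ?_) (by positivity)
    push_cast
    ring
  have mean_eq : empMean φ (Finset.univ.val.map f) - μ
      = ((P : ℝ) ^ 2)⁻¹ • ∑ j, (φ (f j) - μ) := by
    rw [← empMean_const sample_ne μ, ← empMean_sub, empMean_map, empMean, Finset.card_val,
      Finset.card_fin, Nat.cast_pow, empMean_const sample_ne]
    rfl
  rw [mean_eq, norm_smul, norm_inv, norm_pow, Real.norm_natCast, inv_mul_le_iff₀ (by positivity)]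
  refine sum_le.trans_eq ?_
  field_simp

theorem exists_net_sample_norm_empMean_sub_le {φ : X → H} {D : Multiset X} {r η : ℝ} (hD : D ≠ 0)
    (hφ : ∀ x ∈ D, ‖φ x‖ ≤ r) {N : Set X} (hN : ∀ x ∈ D, ∃ z ∈ N, ‖φ z - φ x‖ ≤ η) {P : ℕ}
    (hP : 0 < P) :
    ∃ f : Fin (P ^ 2) → N,
      ‖empMean φ (Finset.univ.val.map fun j => (f j : X)) - empMean φ D‖ ≤ η + 2 * r / P := by
  obtain ⟨f, hfD, hf⟩ := exists_sample_norm_empMean_sub_le hD hφ hP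
  choose ρ hρN hρ using fun j => hN (f j) (hfD j)
  have hη : 0 ≤ η := (norm_nonneg _).trans (hρ ⟨0, by positivity⟩)
  refine ⟨fun j => ⟨ρ j, hρN j⟩, ?_⟩
  have rounding : ‖empMean φ (Finset.univ.val.map ρ) - empMean φ (Finset.univ.val.map f)‖ ≤ η := by
    rw [empMean_map, empMean_map, ← empMean_sub]
    exact norm_empMean_le hη fun j _ => hρ j
  linarith [norm_sub_le_norm_sub_add_norm_sub (empMean φ (Finset.univ.val.map ρ))
    (empMean φ (Finset.univ.val.map f)) (empMean φ D)]

end EmpiricalMean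

section MeanMechanism

variable {X H R : Type*} [NormedAddCommGroup H] [InnerProductSpace ℝ H]
  [MeasurableSpace R] [MeasurableSingletonClass R]

/-- The exponential mechanism that selects, among finitely many candidate points `c r`, one that is
close to the mean of the feature map `φ` over the database; `a` is the inverse temperature. -/
noncomputable def meanMechanism (c : R → H) (φ : X → H) (a : ℝ) (D : Multiset X) : Measure R :=
  Measure.count.tilted fun r => -(a * ‖c r - empMean φ D‖)

variable {c : R → H} {φ : X → H} {a : ℝ}

instance [Finite R] [Nonempty R] (D : Multiset X) : IsProbabilityMeasure (meanMechanism c φ a D) :=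
  isProbabilityMeasure_tilted .of_finite

theorem differentiallyPrivate_meanMechanism [Finite R] {ε r : ℝ} {n : ℕ} (ha : 0 ≤ a)
    (hε : 4 * a * r ≤ ε * n) (hn : 0 < n) :
    DifferentiallyPrivate ε {D | D.card = n ∧ ∀ x ∈ D, ‖φ x‖ ≤ r} (meanMechanism c φ a) := by
  rintro D ⟨hDn, hD⟩ D' ⟨-, hD'⟩ hDD'
  have hn' : (0 : ℝ) < n := by exact_mod_cast hn
  have sensitivity : ∀ i, |-(a * ‖c i - empMean φ D‖) - -(a * ‖c i - empMean φ D'‖)| ≤ ε / 2 :=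
    fun i => by
      rw [neg_sub_neg, ← mul_sub, abs_mul, abs_of_nonneg ha]
      calc a * |‖c i - empMean φ D'‖ - ‖c i - empMean φ D‖| ≤ a * (2 * r / n) := by
            gcongr
            refine (abs_norm_sub_norm_le _ _).trans ?_
            rw [sub_sub_sub_cancel_left, ← hDn]
            exact norm_empMean_sub_le_of_neighbor hD hD' hDD'
        _ ≤ ε / 2 := by
            rw [← mul_div_assoc, div_le_iff₀ hn']
            linarith
  simpa only [meanMechanism, mul_div_cancel₀ ε two_ne_zero] using
    tilted_le_smul_tilted .of_finite .of_finite sensitivity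

theorem one_sub_le_meanMechanism [Fintype R] [Nonempty R] {η δ : ℝ} {D : Multiset X} (ha : 0 < a)
    (hη : ∃ i, ‖c i - empMean φ D‖ ≤ η) :
    1 - ENNReal.ofReal (Fintype.card R * Real.exp (-(a * δ)))
      ≤ meanMechanism c φ a D {i | ‖c i - empMean φ D‖ ≤ η + δ} := by
  obtain ⟨i₀, hi₀⟩ := hη
  have far_le : meanMechanism c φ a D {i | ‖c i - empMean φ D‖ ≤ η + δ}ᶜ
      ≤ ENNReal.ofReal (Fintype.card R * Real.exp (-(a * δ))) := by
    refine (measure_mono fun i hi => ?_).trans (count_tilted_setOf_lt_le _ i₀ (a * δ))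
    have hi' : η + δ < ‖c i - empMean φ D‖ := by simpa using hi
    change -(a * _) < -(a * _) - a * δ
    linarith [mul_lt_mul_of_pos_left hi' ha, mul_le_mul_of_nonneg_left hi₀ ha.le]
  rw [tsub_le_iff_right]
  calc 1 = meanMechanism c φ a D Set.univ := measure_univ.symm
    _ ≤ _ := measure_univ_le_add_compl _
    _ ≤ _ := by gcongr

end MeanMechanism

section Net

open Metric Module

open scoped Function NNReal

theorem packingNumber_ne_top_of_isCompact {X : Type*} [PseudoEMetricSpace X] {A : Set X}
    (hA : IsCompact A) {δ : ℝ≥0} (hδ : 0 < δ) :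
    packingNumber δ A ≠ ⊤ := by
  obtain ⟨C, -, hC, hcover⟩ := exists_finite_isCover_of_isCompact (half_pos hδ).ne' hA
  have := packingNumber_two_mul_le_externalCoveringNumber (δ / 2) A
  rw [mul_div_cancel₀ _ two_ne_zero] at this
  exact ((this.trans hcover.externalCoveringNumber_le_encard).trans_lt hC.encard_lt_top).ne

variable {E : Type*} [NormedAddCommGroup E] [NormedSpace ℝ E] [FiniteDimensional ℝ E]

theorem card_le_of_isSeparated_of_subset_closedBall {s : Finset E} {x : E} {r : ℝ} {δ : ℝ≥0}
    (hr : 0 ≤ r) (hδ : 0 < δ) (hs : (s : Set E) ⊆ closedBall x r)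
    (hsep : IsSeparated δ (s : Set E)) :
    (s.card : ℝ) ≤ (2 * r / δ + 1) ^ finrank ℝ E := by
  borelize E
  let μ : Measure E := Measure.addHaar
  have hδ2 : (0 : ℝ) < δ / 2 := half_pos (mod_cast hδ)
  have disjoint : (s : Set E).Pairwise (Disjoint on fun y => ball y (δ / 2)) := by
    intro y hy z hz hyz
    refine ball_disjoint_ball ?_
    rw [add_halves, ← coe_nndist]
    have separated : (δ : ENNReal) < edist y z := hsep hy hz hyz
    rw [edist_nndist] at separated
    exact_mod_cast separated.le
  have contained : ⋃ y ∈ s, ball y (δ / 2 : ℝ) ⊆ ball x (r + δ / 2) :=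
    Set.iUnion₂_subset fun y hy => ball_subset_ball' (by linarith [mem_closedBall.1 (hs hy)])
  have volume_le : (s.card : ENNReal) * ENNReal.ofReal ((δ / 2 : ℝ) ^ finrank ℝ E) * μ (ball 0 1)
      ≤ ENNReal.ofReal ((r + δ / 2) ^ finrank ℝ E) * μ (ball 0 1) := by
    calc (s.card : ENNReal) * ENNReal.ofReal ((δ / 2 : ℝ) ^ finrank ℝ E) * μ (ball 0 1)
        = μ (⋃ y ∈ s, ball y (δ / 2 : ℝ)) := by
          rw [measure_biUnion_finset disjoint fun y _ => measurableSet_ball]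
          simp only [μ.addHaar_ball_of_pos _ hδ2, Finset.sum_const, nsmul_eq_mul, mul_assoc]
      _ ≤ μ (ball x (r + δ / 2)) := measure_mono contained
      _ = _ := μ.addHaar_ball_of_pos _ (by positivity)
  rw [ENNReal.mul_le_mul_iff_left (measure_ball_pos _ _ zero_lt_one).ne' measure_ball_lt_top.ne,
    ← ENNReal.ofReal_natCast, ← ENNReal.ofReal_mul (Nat.cast_nonneg _),
    ENNReal.ofReal_le_ofReal_iff (by positivity), ← le_div_iff₀ (by positivity), ← div_pow]
    at volume_le
  rwa [add_div, div_self hδ2.ne', div_div_eq_mul_div, mul_comm r] at volume_le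

theorem exists_finset_net_closedBall {r δ : ℝ} (hr : 0 ≤ r) (hδ : 0 < δ) (x : E) :
    ∃ N : Finset E, (N : Set E) ⊆ closedBall x r ∧
      (∀ y ∈ closedBall x r, ∃ z ∈ N, dist y z ≤ δ) ∧
      (N.card : ℝ) ≤ (2 * r / δ + 1) ^ finrank ℝ E := by
  lift δ to ℝ≥0 using hδ.le
  have packing_ne_top := packingNumber_ne_top_of_isCompact (isCompact_closedBall x r)
    (NNReal.coe_pos.1 hδ)
  obtain ⟨N, hN⟩ : ∃ N : Finset E, (N : Set E) = maximalSeparatedSet δ (closedBall x r) :=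
    (Set.encard_ne_top_iff.1
      ((encard_maximalSeparatedSet packing_ne_top).trans_ne packing_ne_top)).exists_finset_coe
  have subset : (N : Set E) ⊆ closedBall x r := hN ▸ maximalSeparatedSet_subset
  refine ⟨N, subset, fun y hy => ?_, card_le_of_isSeparated_of_subset_closedBall hr
    (NNReal.coe_pos.1 hδ) subset (hN ▸ isSeparated_maximalSeparatedSet)⟩
  have cover := isCover_iff_subset_iUnion_closedBall.1 (isCover_maximalSeparatedSet packing_ne_top)
  simpa only [← hN, Set.mem_iUnion, mem_closedBall, Finset.mem_coe, exists_prop] using cover hy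

end Net

section Tensor

variable {ι J : Type*} [Fintype ι]

/-- The tensor product `⨂ l, u l` of a family of Euclidean vectors, in coordinates. -/
noncomputable def pureTensor :
    MultilinearMap ℝ (fun _ : ι => EuclideanSpace ℝ J) (EuclideanSpace ℝ (ι → J)) :=
  (WithLp.linearEquiv 2 ℝ ((ι → J) → ℝ)).symm.toLinearMap.compMultilinearMap <|
    MultilinearMap.pi fun σ => (MultilinearMap.mkPiAlgebra ℝ ι ℝ).compLinearMap fun l =>
      (EuclideanSpace.proj (𝕜 := ℝ) (σ l)).toLinearMap

theorem pureTensor_apply (u : ι → EuclideanSpace ℝ J) (σ : ι → J) :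
    pureTensor u σ = ∏ l, u l (σ l) := rfl

variable [DecidableEq ι] [Fintype J]

theorem inner_pureTensor (u v : ι → EuclideanSpace ℝ J) :
    ⟪pureTensor u, pureTensor v⟫ = ∏ l, ⟪u l, v l⟫ := by
  simp only [PiLp.inner_apply, pureTensor_apply, RCLike.inner_apply, conj_trivial,
    ← Finset.prod_mul_distrib]
  exact (Fintype.prod_sum fun l j => v l j * u l j).symm

theorem norm_pureTensor (u : ι → EuclideanSpace ℝ J) : ‖pureTensor u‖ = ∏ l, ‖u l‖ := by
  have : ‖pureTensor u‖ ^ 2 = (∏ l, ‖u l‖) ^ 2 := by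
    simp only [← real_inner_self_eq_norm_sq, inner_pureTensor, ← Finset.prod_pow]
  exact (sq_eq_sq₀ (norm_nonneg _) (by positivity)).1 this

theorem norm_pureTensor_const_sub_le {u v : EuclideanSpace ℝ J} (hu : ‖u‖ ≤ 1) (hv : ‖v‖ ≤ 1) :
    ‖pureTensor (fun _ : ι => u) - pureTensor (fun _ : ι => v)‖ ≤ Fintype.card ι * ‖u - v‖ := by
  have norm_le : ∀ m : ι → EuclideanSpace ℝ J, ‖pureTensor m‖ ≤ 1 * ∏ l, ‖m l‖ := fun m => by
    rw [one_mul, norm_pureTensor]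
  have product_le : max ‖fun _ : ι => u‖ ‖fun _ : ι => v‖ ^ (Fintype.card ι - 1) ≤ 1 :=
    pow_le_one₀ (le_max_of_le_left (norm_nonneg _)) <| max_le
      ((pi_norm_const_le u).trans hu) ((pi_norm_const_le v).trans hv)
  calc ‖pureTensor (fun _ : ι => u) - pureTensor (fun _ : ι => v)‖
      ≤ 1 * Fintype.card ι * max ‖fun _ : ι => u‖ ‖fun _ : ι => v‖ ^ (Fintype.card ι - 1)
          * ‖(fun _ : ι => u) - fun _ : ι => v‖ :=
        (pureTensor (ι := ι) (J := J)).norm_image_sub_le_of_bound zero_le_one norm_le _ _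
    _ ≤ 1 * Fintype.card ι * 1 * ‖u - v‖ := by
        gcongr
        exact pi_norm_const_le (u - v)
    _ = Fintype.card ι * ‖u - v‖ := by ring

end Tensor

section Homogenize

variable {κ : Type*}

/-- The vector `(1, x) / √2`, whose inner product with `(1, y) / √2` is the affine function
`(1 + ⟪x, y⟫) / 2`. -/
noncomputable def homogenize (x : EuclideanSpace ℝ κ) : EuclideanSpace ℝ (Option κ) :=
  WithLp.toLp 2 fun i => (i.elim 1 x) / √2

variable [Fintype κ]

theorem inner_homogenize (x y : EuclideanSpace ℝ κ) :
    ⟪homogenize x, homogenize y⟫ = (1 + ⟪x, y⟫) / 2 := by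
  simp only [homogenize, PiLp.inner_apply, RCLike.inner_apply, conj_trivial, Fintype.sum_option,
    Option.elim, div_mul_div_comm, Real.mul_self_sqrt zero_le_two, ← Finset.sum_div]
  ring

theorem norm_homogenize_sq (x : EuclideanSpace ℝ κ) : ‖homogenize x‖ ^ 2 = (1 + ‖x‖ ^ 2) / 2 := by
  rw [← real_inner_self_eq_norm_sq, inner_homogenize, real_inner_self_eq_norm_sq]

theorem norm_homogenize_le_one {x : EuclideanSpace ℝ κ} (hx : ‖x‖ ≤ 1) : ‖homogenize x‖ ≤ 1 := by
  rw [← sq_le_one_iff₀ (norm_nonneg _), norm_homogenize_sq]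
  linarith [pow_le_one₀ (norm_nonneg x) hx (n := 2)]

theorem norm_homogenize_sub_le (x y : EuclideanSpace ℝ κ) :
    ‖homogenize x - homogenize y‖ ≤ ‖x - y‖ := by
  refine le_of_sq_le_sq ?_ (norm_nonneg _)
  rw [norm_sub_sq_real, norm_sub_sq_real, norm_homogenize_sq, norm_homogenize_sq, inner_homogenize]
  linarith [sq_nonneg ‖x - y‖, norm_sub_sq_real x y]

end Homogenize

section Majority

/-- The probability that more than half of `2 * M` independent tosses show heads, where heads and
tails have probabilities `p` and `q`. -/
noncomputable def majority (M : ℕ) (p q : ℝ) : ℝ :=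
  ∑ A : Finset (Fin (2 * M)) with M < A.card, p ^ A.card * q ^ (2 * M - A.card)

variable {M : ℕ} {p q : ℝ}

theorem pow_mul_pow_le_mul_pow {a b : ℕ} (hp : 0 ≤ p) (hpq : p ≤ q) (hab : b ≤ a)
    (hM : a + b = 2 * M) : p ^ a * q ^ b ≤ (p * q) ^ M := by
  obtain ⟨k, rfl⟩ : ∃ k, M = b + k := ⟨M - b, by omega⟩
  obtain rfl : a = b + k + k := by omega
  calc p ^ (b + k + k) * q ^ b = p ^ (b + k) * p ^ k * q ^ b := by rw [pow_add]
    _ ≤ p ^ (b + k) * q ^ k * q ^ b :=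
        mul_le_mul_of_nonneg_right
          (mul_le_mul_of_nonneg_left (pow_le_pow_left₀ hp hpq k) (pow_nonneg hp _))
          (pow_nonneg (hp.trans hpq) _)
    _ = (p * q) ^ (b + k) := by ring

theorem sum_le_four_mul_mul_pow {s : Finset (Finset (Fin (2 * M)))} {f : Finset (Fin (2 * M)) → ℝ}
    (hpq : 0 ≤ p * q) (hf : ∀ A ∈ s, f A ≤ (p * q) ^ M) : ∑ A ∈ s, f A ≤ (4 * p * q) ^ M := by
  have card_le : (s.card : ℝ) ≤ 4 ^ M := by
    have := s.card_le_univ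
    rw [Fintype.card_finset, Fintype.card_fin, pow_mul] at this
    exact_mod_cast this
  calc ∑ A ∈ s, f A ≤ s.card * (p * q) ^ M := by
        simpa only [nsmul_eq_mul] using Finset.sum_le_card_nsmul s f _ hf
    _ ≤ 4 ^ M * (p * q) ^ M := by gcongr
    _ = (4 * p * q) ^ M := by rw [← mul_pow, mul_assoc]

theorem majority_nonneg (hp : 0 ≤ p) (hq : 0 ≤ q) : 0 ≤ majority M p q :=
  Finset.sum_nonneg fun _ _ => by positivity

theorem majority_le (hp : 0 ≤ p) (hpq : p ≤ q) : majority M p q ≤ (4 * p * q) ^ M :=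
  sum_le_four_mul_mul_pow (mul_nonneg hp (hp.trans hpq)) fun A hA => by
    have hcard : M < A.card := (Finset.mem_filter.1 hA).2
    exact pow_mul_pow_le_mul_pow hp hpq (by omega) (Nat.add_sub_of_le (card_finset_fin_le A))

theorem one_sub_majority (h : p + q = 1) : 1 - majority M p q =
    ∑ A : Finset (Fin (2 * M)) with ¬ M < A.card, p ^ A.card * q ^ (2 * M - A.card) := by
  have total : ∑ A : Finset (Fin (2 * M)), p ^ A.card * q ^ (2 * M - A.card) = 1 := by
    simpa [h] using Fintype.sum_pow_mul_eq_add_pow (Fin (2 * M)) p q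
  rw [← total, majority, sub_eq_iff_eq_add', Finset.sum_filter_add_sum_filter_not]

theorem majority_le_one (hp : 0 ≤ p) (hq : 0 ≤ q) (h : p + q = 1) : majority M p q ≤ 1 := by
  rw [← sub_nonneg, one_sub_majority h]
  exact Finset.sum_nonneg fun _ _ => by positivity

theorem one_sub_majority_le (hq : 0 ≤ q) (hqp : q ≤ p) (h : p + q = 1) :
    1 - majority M p q ≤ (4 * p * q) ^ M := by
  rw [one_sub_majority h]
  refine sum_le_four_mul_mul_pow (mul_nonneg (hq.trans hqp) hq) fun A hA => ?_
  have hcard : ¬ M < A.card := (Finset.mem_filter.1 hA).2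
  have hA_le : A.card ≤ 2 * M := card_finset_fin_le A
  rw [mul_comm, mul_comm p]
  exact pow_mul_pow_le_mul_pow hq hqp (by omega) (Nat.sub_add_cancel hA_le)

theorem abs_majority_sub_ite_le {t : ℝ} (ht : |t| ≤ 1) :
    |majority M ((1 + t) / 2) ((1 - t) / 2) - if 0 < t then 1 else 0| ≤ (1 - t ^ 2) ^ M := by
  obtain ⟨ht₁, ht₂⟩ := abs_le.1 ht
  have hp : 0 ≤ (1 + t) / 2 := by linarith
  have hq : 0 ≤ (1 - t) / 2 := by linarith
  have hsum : (1 + t) / 2 + (1 - t) / 2 = 1 := by ring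
  have hprod : 4 * ((1 + t) / 2) * ((1 - t) / 2) = 1 - t ^ 2 := by ring
  rw [← hprod]
  split_ifs with h
  · rw [abs_sub_comm, abs_of_nonneg (sub_nonneg.2 (majority_le_one hp hq hsum))]
    exact one_sub_majority_le hq (by linarith) hsum
  · rw [sub_zero, abs_of_nonneg (majority_nonneg hp hq)]
    exact majority_le hp (by linarith)

end Majority

section Halfspace

variable {κ : Type*}

/-- The tensor power of `homogenize x`. Polynomials of degree at most `N` in `⟪x, y⟫` are inner
products of this feature of `x` with a vector depending only on `y`. -/
noncomputable def feature (N : ℕ) (x : EuclideanSpace ℝ κ) :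
    EuclideanSpace ℝ (Fin N → Option κ) :=
  pureTensor fun _ => homogenize x

/-- The weight vector whose inner product with `feature (2 * M) x` is the probability that most of
`2 * M` coins, each showing heads with probability `(1 + ⟪x, y⟫) / 2`, show heads. -/
noncomputable def majorityWeight (M : ℕ) (y : EuclideanSpace ℝ κ) :
    EuclideanSpace ℝ (Fin (2 * M) → Option κ) :=
  ∑ A : Finset (Fin (2 * M)) with M < A.card,
    pureTensor fun l => homogenize (if l ∈ A then y else -y)

variable [Fintype κ]

theorem norm_feature_le_one (N : ℕ) {x : EuclideanSpace ℝ κ} (hx : ‖x‖ ≤ 1) :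
    ‖feature N x‖ ≤ 1 := by
  rw [feature, norm_pureTensor]
  exact Finset.prod_le_one (fun _ _ => norm_nonneg _) fun _ _ => norm_homogenize_le_one hx

theorem norm_feature_sub_le (N : ℕ) {x y : EuclideanSpace ℝ κ} (hx : ‖x‖ ≤ 1) (hy : ‖y‖ ≤ 1) :
    ‖feature N x - feature N y‖ ≤ N * ‖x - y‖ := by
  calc ‖feature N x - feature N y‖ ≤ N * ‖homogenize x - homogenize y‖ := by
        simpa only [Fintype.card_fin] using! norm_pureTensor_const_sub_le (ι := Fin N)
          (norm_homogenize_le_one hx) (norm_homogenize_le_one hy)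
    _ ≤ N * ‖x - y‖ := by
        gcongr
        exact norm_homogenize_sub_le x y

theorem norm_majorityWeight_le (M : ℕ) {y : EuclideanSpace ℝ κ} (hy : ‖y‖ ≤ 1) :
    ‖majorityWeight M y‖ ≤ 4 ^ M := by
  have norm_term_le : ∀ A : Finset (Fin (2 * M)),
      ‖pureTensor fun l => homogenize (if l ∈ A then y else -y)‖ ≤ 1 := fun A => by
    rw [norm_pureTensor]
    refine Finset.prod_le_one (fun _ _ => norm_nonneg _) fun l _ => norm_homogenize_le_one ?_
    split_ifs
    · exact hy
    · rwa [norm_neg]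
  calc ‖majorityWeight M y‖
      ≤ ∑ A : Finset (Fin (2 * M)) with M < A.card,
          ‖pureTensor fun l => homogenize (if l ∈ A then y else -y)‖ := norm_sum_le _ _
    _ ≤ (4 * 1 * 1) ^ M :=
        sum_le_four_mul_mul_pow (by norm_num) fun A _ => by simpa using norm_term_le A
    _ = 4 ^ M := by norm_num

theorem inner_feature_majorityWeight (M : ℕ) (x y : EuclideanSpace ℝ κ) :
    ⟪feature (2 * M) x, majorityWeight M y⟫ = majority M ((1 + ⟪x, y⟫) / 2) ((1 - ⟪x, y⟫) / 2) := by
  rw [majorityWeight, inner_sum, majority]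
  refine Finset.sum_congr rfl fun A _ => ?_
  simp only [feature, inner_pureTensor, inner_homogenize, apply_ite, inner_neg_right,
    ← sub_eq_add_neg]
  rw [Finset.prod_ite, Finset.prod_const, Finset.prod_const, Finset.filter_univ_mem,
    Finset.filter_not, Finset.filter_univ_mem, Finset.card_univ_sdiff, Fintype.card_fin]

theorem hquery_eq_empMean {d : ℕ} (y : EuclideanSpace ℝ (Fin d))
    (D : Multiset (EuclideanSpace ℝ (Fin d))) :
    hquery y D = empMean (fun x => if 0 < ⟪x, y⟫ then (1 : ℝ) else 0) D := by
  have card_filter : ((D.filter fun x => 0 < ⟪x, y⟫).card : ℝ)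
      = (D.map fun x => if 0 < ⟪x, y⟫ then (1 : ℝ) else 0).sum := by
    induction D using Multiset.induction with
    | empty => simp
    | cons x D ih =>
      rw [Multiset.filter_cons, Multiset.card_add, Nat.cast_add, ih, Multiset.map_cons,
        Multiset.sum_cons]
      split_ifs <;> simp
  rw [hquery, empMean, smul_eq_mul, div_eq_inv_mul, card_filter]

theorem abs_inner_empMean_feature_sub_hquery_le {d M : ℕ} {γ : ℝ} {y : EuclideanSpace ℝ (Fin d)}
    {D : Multiset (EuclideanSpace ℝ (Fin d))} (hγ : 0 ≤ γ) (hy : ‖y‖ ≤ 1)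
    (hD : ∀ x ∈ D, ‖x‖ ≤ 1) (hmargin : ∀ x ∈ D, γ ≤ |⟪x, y⟫|) :
    |⟪empMean (feature (2 * M)) D, majorityWeight M y⟫ - hquery y D| ≤ Real.exp (-(γ ^ 2 * M)) := by
  rw [inner_empMean, hquery_eq_empMean, ← empMean_sub, ← Real.norm_eq_abs]
  refine norm_empMean_le (Real.exp_pos _).le fun x hx => ?_
  have inner_le : |⟪x, y⟫| ≤ 1 :=
    (abs_real_inner_le_norm x y).trans (mul_le_one₀ (hD x hx) (norm_nonneg y) hy)
  rw [inner_feature_majorityWeight, Real.norm_eq_abs]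
  calc |majority M ((1 + ⟪x, y⟫) / 2) ((1 - ⟪x, y⟫) / 2) - if 0 < ⟪x, y⟫ then 1 else 0|
      ≤ (1 - ⟪x, y⟫ ^ 2) ^ M := abs_majority_sub_ite_le inner_le
    _ ≤ Real.exp (-⟪x, y⟫ ^ 2) ^ M := by
        gcongr
        · linarith [(sq_le_one_iff_abs_le_one _).2 inner_le]
        · exact Real.one_sub_le_exp_neg _
    _ = Real.exp (-(⟪x, y⟫ ^ 2 * M)) := by rw [← Real.exp_nat_mul]; ring_nf
    _ ≤ Real.exp (-(γ ^ 2 * M)) := by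
        rw [← sq_abs ⟪x, y⟫]
        gcongr
        exact hmargin x hx

end Halfspace

section Release

variable {d : ℕ} {Ω Ψ : Type*} [MeasurableSpace Ω] [MeasurableSpace Ψ] {n : ℕ} {γ α β ε : ℝ}

/-- On databases of `n` unit vectors, the mechanism `A` is `ε`-differentially private, and with
probability at least `1 - β` the map `Eval` recovers from its output, up to an error `α`, the answer
to every halfspace query of margin `γ`. -/
structure IsMarginRelease (n : ℕ) (γ α β ε : ℝ)
    (A : Multiset (EuclideanSpace ℝ (Fin d)) → Measure Ω)
    (Eval : Ω → EuclideanSpace ℝ (Fin d) → ℝ) : Prop where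
  isProbabilityMeasure : ∀ D, IsProbabilityMeasure (A D)
  differentiallyPrivate : DifferentiallyPrivate ε {D | D.card = n ∧ ∀ x ∈ D, ‖x‖ = 1} A
  accurate : ∀ D, D.card = n → (∀ x ∈ D, ‖x‖ = 1) →
    1 - ENNReal.ofReal β ≤ A D {o | ∀ y, ‖y‖ = 1 → (∀ x ∈ D, γ ≤ |⟪x, y⟫|) →
      |Eval o y - hquery y D| ≤ α}

theorem IsMarginRelease.map [Nonempty Ω] {A : Multiset (EuclideanSpace ℝ (Fin d)) → Measure Ω}
    {Eval : Ω → EuclideanSpace ℝ (Fin d) → ℝ} (h : IsMarginRelease n γ α β ε A Eval) {f : Ω → Ψ}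
    (hf : MeasurableEmbedding f) :
    IsMarginRelease n γ α β ε (fun D => (A D).map f) (Eval ∘ Function.invFun f) where
  isProbabilityMeasure D :=
    have := h.isProbabilityMeasure D
    Measure.isProbabilityMeasure_map hf.measurable.aemeasurable
  differentiallyPrivate := h.differentiallyPrivate.map hf.measurable
  accurate D hDn hD := by
    rw [hf.map_apply]
    simpa only [Set.preimage_ofPred_eq, Function.comp_apply,
      Function.leftInverse_invFun hf.injective _] using h.accurate D hDn hD

theorem IsMarginRelease.exists_real_output [Nonempty Ω] [StandardBorelSpace Ω]
    {A : Multiset (EuclideanSpace ℝ (Fin d)) → Measure Ω}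
    {Eval : Ω → EuclideanSpace ℝ (Fin d) → ℝ} (h : IsMarginRelease n γ α β ε A Eval) :
    ∃ (A' : Multiset (EuclideanSpace ℝ (Fin d)) → Measure (Fin 1 → ℝ))
      (Eval' : (Fin 1 → ℝ) → EuclideanSpace ℝ (Fin d) → ℝ), IsMarginRelease n γ α β ε A' Eval' :=
  ⟨_, _, h.map ((MeasurableEquiv.funUnique (Fin 1) ℝ).symm.measurableEmbedding.comp
    (measurableEmbedding_embeddingReal Ω))⟩

theorem abs_inner_majorityWeight_sub_hquery_le {M : ℕ} {τ : ℝ} {y : EuclideanSpace ℝ (Fin d)}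
    {D : Multiset (EuclideanSpace ℝ (Fin d))} {v : EuclideanSpace ℝ (Fin (2 * M) → Option (Fin d))}
    (hγ : 0 ≤ γ) (hy : ‖y‖ ≤ 1) (hD : ∀ x ∈ D, ‖x‖ ≤ 1) (hmargin : ∀ x ∈ D, γ ≤ |⟪x, y⟫|)
    (hv : ‖v - empMean (feature (2 * M)) D‖ ≤ τ) :
    |⟪v, majorityWeight M y⟫ - hquery y D| ≤ τ * 4 ^ M + Real.exp (-(γ ^ 2 * M)) := by
  refine (abs_sub_le _ ⟪empMean (feature (2 * M)) D, majorityWeight M y⟫ _).trans (add_le_add ?_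
    (abs_inner_empMean_feature_sub_hquery_le hγ hy hD hmargin))
  rw [← inner_sub_left]
  exact (abs_real_inner_le_norm _ _).trans
    (mul_le_mul hv (norm_majorityWeight_le M hy) (norm_nonneg _) ((norm_nonneg _).trans hv))

theorem exists_finset_sample_norm_empMean_feature_sub_le (d : ℕ) {M P : ℕ} (hM : 0 < M)
    (hP : 0 < P) :
    ∃ N : Finset (EuclideanSpace ℝ (Fin d)), N.Nonempty ∧ (N.card : ℝ) ≤ (4 * M * P + 1) ^ d ∧
      ∀ D : Multiset (EuclideanSpace ℝ (Fin d)), D ≠ 0 → (∀ x ∈ D, ‖x‖ ≤ 1) →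
        ∃ f : Fin (P ^ 2) → N,
          ‖empMean (feature (2 * M)) (Finset.univ.val.map fun j => (f j : EuclideanSpace ℝ (Fin d)))
            - empMean (feature (2 * M)) D‖ ≤ 3 / P := by
  have hδ : (0 : ℝ) < 1 / (2 * M * P) := by positivity
  obtain ⟨N, hN_ball, hN_net, hN_card⟩ := exists_finset_net_closedBall zero_le_one hδ
    (0 : EuclideanSpace ℝ (Fin d))
  refine ⟨N, ?_, ?_, fun D hD hD_ball => ?_⟩
  · obtain ⟨z, hz, -⟩ := hN_net 0 (Metric.mem_closedBall_self zero_le_one)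
    exact ⟨z, hz⟩
  · rw [finrank_euclideanSpace_fin] at hN_card
    convert hN_card using 3
    field_simp
    norm_num
  · have hη : ∀ x ∈ D, ∃ z ∈ (N : Set (EuclideanSpace ℝ (Fin d))),
        ‖feature (2 * M) z - feature (2 * M) x‖ ≤ 1 / P := by
      intro x hx
      obtain ⟨z, hzN, hz⟩ := hN_net x (mem_closedBall_zero_iff.2 (hD_ball x hx))
      rw [dist_eq_norm'] at hz
      refine ⟨z, hzN, (norm_feature_sub_le _ (mem_closedBall_zero_iff.1 (hN_ball hzN))
        (hD_ball x hx)).trans ?_⟩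
      calc ((2 * M : ℕ) : ℝ) * ‖z - x‖ ≤ ((2 * M : ℕ) : ℝ) * (1 / (2 * M * P)) := by gcongr
        _ = 1 / P := by
          push_cast
          field_simp
    obtain ⟨f, hf⟩ := exists_net_sample_norm_empMean_sub_le hD
      (fun x hx => norm_feature_le_one (2 * M) (hD_ball x hx)) hη hP
    exact ⟨f, hf.trans_eq (by ring)⟩

theorem pow_mul_exp_neg_le {K B x : ℝ} {d s : ℕ} (hK : 0 ≤ K) (hB : 0 < B) (hKB : K ≤ B ^ d)
    (hβ : 0 < β) (hx : s * d * Real.log B + Real.log (1 / β) ≤ x) :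
    K ^ s * Real.exp (-x) ≤ β := by
  have hpow : (B ^ d) ^ s = Real.exp (s * d * Real.log B) := by
    rw [← pow_mul, ← Real.exp_log (pow_pos hB _), Real.log_pow]
    push_cast
    ring_nf
  calc K ^ s * Real.exp (-x) ≤ (B ^ d) ^ s * Real.exp (-x) := by gcongr
    _ = Real.exp (s * d * Real.log B - x) := by rw [hpow, ← Real.exp_add, sub_eq_add_neg]
    _ ≤ Real.exp (Real.log β) := by
      rw [one_div, Real.log_inv] at hx
      gcongr
      linarith
    _ = β := Real.exp_log hβ

theorem exists_isMarginRelease {M P : ℕ} (hM : 0 < M) (hP : 0 < P) (hd : 1 ≤ d) (hγ : 0 ≤ γ)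
    (hβ : 0 < β) (hβ₁ : β ≤ 1) (hε : 0 < ε) (hPα : 16 * 4 ^ M ≤ P * α)
    (hMγ : Real.exp (-(γ ^ 2 * M)) ≤ α / 2)
    (hεn : P * (P ^ 2 * d * Real.log (4 * M * P + 1) + Real.log (1 / β)) ≤ ε * n) :
    ∃ (A : Multiset (EuclideanSpace ℝ (Fin d)) → Measure (Fin 1 → ℝ))
      (Eval : (Fin 1 → ℝ) → EuclideanSpace ℝ (Fin d) → ℝ), IsMarginRelease n γ α β ε A Eval := by
  have hP' : (0 : ℝ) < P := mod_cast hP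
  have hn : 0 < n := by
    have log_nonneg := Real.log_nonneg ((one_le_div hβ).2 hβ₁)
    have log_pos : 0 < Real.log (4 * M * P + 1) :=
      Real.log_pos (lt_add_of_pos_left 1 (by positivity))
    exact_mod_cast pos_of_mul_pos_right (lt_of_lt_of_le (by positivity) hεn) hε.le
  obtain ⟨N, hN, hN_card, hN_sample⟩ := exists_finset_sample_norm_empMean_feature_sub_le d hM hP
  have : Nonempty N := hN.to_subtype
  let c : (Fin (P ^ 2) → N) → EuclideanSpace ℝ (Fin (2 * M) → Option (Fin d)) := fun f =>
    empMean (feature (2 * M)) (Finset.univ.val.map fun j => (f j : EuclideanSpace ℝ (Fin d)))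
  have failure_le : Fintype.card (Fin (P ^ 2) → N) * Real.exp (-(ε * n / 4 * (4 / P))) ≤ β := by
    rw [Fintype.card_fun, Fintype.card_coe, Fintype.card_fin, Nat.cast_pow]
    refine pow_mul_exp_neg_le (Nat.cast_nonneg _) (by positivity) hN_card hβ ?_
    rw [div_mul_div_cancel₀ four_ne_zero, le_div_iff₀' hP']
    exact_mod_cast hεn
  have error_le : (3 / P + 4 / P) * 4 ^ M ≤ α / 2 := by
    rw [← add_div, div_mul_eq_mul_div, div_le_iff₀ hP']
    linarith [pow_pos (four_pos (α := ℝ)) M]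
  refine IsMarginRelease.exists_real_output
    (A := meanMechanism c (feature (2 * M)) (ε * n / 4))
    (Eval := fun f y => ⟪c f, majorityWeight M y⟫)
    ⟨fun D => inferInstance, ?_, fun D hDn hD => ?_⟩
  · refine (differentiallyPrivate_meanMechanism (r := 1) (by positivity) (by linarith) hn).mono ?_
    exact fun D hD => ⟨hD.1, fun x hx => norm_feature_le_one _ (hD.2 x hx).le⟩
  · have hD_ball : ∀ x ∈ D, ‖x‖ ≤ 1 := fun x hx => (hD x hx).le
    calc 1 - ENNReal.ofReal β
        ≤ 1 - ENNReal.ofReal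
            (Fintype.card (Fin (P ^ 2) → N) * Real.exp (-(ε * n / 4 * (4 / P)))) := by gcongr
      _ ≤ meanMechanism c (feature (2 * M)) (ε * n / 4) D
            {f | ‖c f - empMean (feature (2 * M)) D‖ ≤ 3 / P + 4 / P} :=
          one_sub_le_meanMechanism (by positivity)
            (hN_sample D (Multiset.card_pos.1 (hDn ▸ hn)) hD_ball)
      _ ≤ _ := by
          refine measure_mono fun f hf y hy hmargin => ?_
          linarith [abs_inner_majorityWeight_sub_hquery_le hγ hy.le hD_ball hmargin hf]

end Release

section Parameters

variable {d T m : ℕ} {γ α β : ℝ}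

theorem two_le_log_eight_div (hα : 0 < α) (hα₁ : α ≤ 1) : 2 ≤ Real.log (8 / α) := by
  have log_eight : Real.log 8 = 3 * Real.log 2 := by
    rw [← Real.log_rpow two_pos]
    norm_num
  calc 2 ≤ Real.log 8 := by linarith [Real.log_two_gt_d9]
    _ ≤ Real.log (8 / α) :=
      Real.log_le_log (by norm_num) ((le_div_iff₀ hα).2 (by linarith))

theorem sixteen_mul_four_pow_le (hα : 0 < α) (hα₁ : α ≤ 1) (hT : 10 * Real.log (8 / α) ≤ T) :
    16 * 4 ^ T ≤ 5 ^ T * α := by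
  have exp_le : Real.exp (1 / 5) ≤ 5 / 4 := by
    rw [← inv_le_inv₀ (by norm_num) (Real.exp_pos _), ← Real.exp_neg]
    linarith [Real.one_sub_le_exp_neg (1 / 5)]
  have inv_le : 16 / α ≤ (5 / 4) ^ T := by
    calc 16 / α ≤ (8 / α) ^ 2 := by
          rw [div_pow, sq α, ← div_div]
          gcongr
          rw [le_div_iff₀ hα]
          linarith
      _ = Real.exp (2 * Real.log (8 / α)) := by
          rw [two_mul, Real.exp_add, Real.exp_log (by positivity), sq]
      _ ≤ Real.exp (T * (1 / 5)) := by
          refine Real.exp_le_exp.2 ?_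
          linarith
      _ = Real.exp (1 / 5) ^ T := Real.exp_nat_mul _ _
      _ ≤ (5 / 4) ^ T := by gcongr
  rw [div_pow, div_le_div_iff₀ hα (by positivity)] at inv_le
  exact inv_le

theorem exp_neg_le_half (hα : 0 < α) {s : ℝ} (hs : Real.log (8 / α) ≤ s) :
    Real.exp (-s) ≤ α / 2 := by
  calc Real.exp (-s) ≤ Real.exp (-Real.log (8 / α)) := by gcongr
    _ = α / 8 := by rw [Real.exp_neg, Real.exp_log (by positivity), inv_div]
    _ ≤ α / 2 := by linarith

theorem five_pow_pow_three_le (hγ : 0 < γ) (hγ₁ : γ ≤ 1) (hT : (256 : ℝ) ≤ T) :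
    ((5 : ℝ) ^ T) ^ 3 ≤ (8 * √T / γ) ^ T := by
  have sqrt_ge : 16 ≤ √(T : ℝ) := Real.le_sqrt_of_sq_le (by linarith)
  rw [pow_right_comm]
  refine pow_le_pow_left₀ (by norm_num) ?_ T
  rw [le_div_iff₀ hγ]
  linarith

theorem four_mul_mul_five_pow_add_one_le (hT : 1 ≤ T) :
    4 * T * 5 ^ T + 1 ≤ ((5 : ℝ) ^ T) ^ 3 := by
  have five_le : (5 : ℝ) ≤ 5 ^ T := le_self_pow₀ (by norm_num) (by omega)
  have T_le : (T : ℝ) ≤ 5 ^ T := mod_cast (Nat.lt_pow_self (by norm_num)).le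
  calc 4 * T * (5 : ℝ) ^ T + 1 ≤ 4 * 5 ^ T * 5 ^ T + 5 ^ T * 5 ^ T := by
        gcongr
        nlinarith
    _ = 5 * (5 ^ T) ^ 2 := by ring
    _ ≤ 5 ^ T * (5 ^ T) ^ 2 := by gcongr
    _ = (5 ^ T) ^ 3 := by ring

theorem dim_le_sample_bound (hd : 1 ≤ d) (hγ : 0 < γ) (hγ₁ : γ ≤ 1) (hα : 0 < α) (hα₁ : α ≤ 1)
    (hβ : 0 < β) (hβ₁ : β ≤ 1) :
    d ≤ 16 / α ^ 2 * d * (Real.log (4 * √d / γ) + Real.log (1 / β)) := by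
  have one_le_sqrt : 1 ≤ √(d : ℝ) := Real.one_le_sqrt.2 (mod_cast hd)
  have exp_one_le : Real.exp 1 ≤ 4 * √d / γ := by
    rw [le_div_iff₀ hγ]
    nlinarith [Real.exp_one_lt_d9]
  have one_le_log : 1 ≤ Real.log (4 * √d / γ) :=
    (Real.le_log_iff_exp_le (by positivity)).2 exp_one_le
  have log_nonneg : 0 ≤ Real.log (1 / β) := Real.log_nonneg ((one_le_div hβ).2 hβ₁)
  have one_le_div_sq : 1 ≤ 16 / α ^ 2 := by
    rw [one_le_div (by positivity)]
    nlinarith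
  calc (d : ℝ) = 1 * d * 1 := by ring
    _ ≤ 16 / α ^ 2 * d * (Real.log (4 * √d / γ) + Real.log (1 / β)) := by
      gcongr
      linarith

theorem mul_log_add_log_le {P B K : ℝ} (hP : 1 ≤ P) (hPB : P ^ 3 ≤ B) (hK : 1 ≤ K)
    (hKP : K ≤ P ^ 3) (hd : 1 ≤ d) (hdm : d ≤ m) (hβ : 0 < β) (hβ₁ : β ≤ 1) :
    P * (P ^ 2 * d * Real.log K + Real.log (1 / β)) ≤ m * B * Real.log (2 * m * B / β) := by
  have hd' : (1 : ℝ) ≤ d := mod_cast hd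
  have hdm' : (d : ℝ) ≤ m := mod_cast hdm
  have hB : 0 < B := (by positivity : 0 < P ^ 3).trans_le hPB
  have log_nonneg : 0 ≤ Real.log (1 / β) := Real.log_nonneg ((one_le_div hβ).2 hβ₁)
  have log_le : Real.log K + Real.log (1 / β) ≤ Real.log (2 * m * B / β) := by
    rw [← Real.log_mul (by positivity) (by positivity), mul_one_div]
    gcongr
    nlinarith
  calc P * (P ^ 2 * d * Real.log K + Real.log (1 / β))
      = d * P ^ 3 * Real.log K + P * Real.log (1 / β) := by ring
    _ ≤ d * P ^ 3 * Real.log K + d * P ^ 3 * Real.log (1 / β) := by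
        gcongr
        nlinarith [le_self_pow₀ hP three_ne_zero]
    _ = d * P ^ 3 * (Real.log K + Real.log (1 / β)) := by ring
    _ ≤ m * B * Real.log (2 * m * B / β) := by
        gcongr
        exact add_nonneg (Real.log_nonneg hK) log_nonneg

end Parameters

theorem stmt15_general {d T m n : ℕ} {γ α β ε : ℝ} (hd : 1 ≤ d) (hγ : 0 < γ) (hγ₁ : γ ≤ 1)
    (hα : 0 < α) (hα₁ : α ≤ 1) (hβ : 0 < β) (hβ₁ : β ≤ 1) (hε : 0 < ε)
    (hT : T = ⌈320 / γ ^ 2 * Real.log (8 / α)⌉₊)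
    (hm : m = ⌈16 / α ^ 2 * d * (Real.log (4 * √d / γ) + Real.log (1 / β))⌉₊)
    (hn : m / ε * (8 * √T / γ) ^ T * Real.log (2 * m * (8 * √T / γ) ^ T / β) ≤ n) :
    ∃ (k : ℕ), 0 < k ∧
    ∃ (A : Multiset (EuclideanSpace ℝ (Fin d)) → Measure (Fin k → ℝ))
      (Eval : (Fin k → ℝ) → EuclideanSpace ℝ (Fin d) → ℝ),
      (∀ D, IsProbabilityMeasure (A D)) ∧
      (∀ D D' : Multiset (EuclideanSpace ℝ (Fin d)), D.card = n → D'.card = n →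
        (∀ x ∈ D, ‖x‖ = 1) → (∀ x ∈ D', ‖x‖ = 1) → Neighbor D D' →
        ∀ S : Set (Fin k → ℝ), MeasurableSet S →
          A D S ≤ ENNReal.ofReal (Real.exp ε) * A D' S) ∧
      (∀ D : Multiset (EuclideanSpace ℝ (Fin d)), D.card = n → (∀ x ∈ D, ‖x‖ = 1) →
        1 - ENNReal.ofReal β ≤
          A D {o | ∀ y : EuclideanSpace ℝ (Fin d), ‖y‖ = 1 →
            (∀ x ∈ D, γ ≤ |⟪x, y⟫|) → |Eval o y - hquery y D| ≤ α}) := by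
  have log_ge := two_le_log_eight_div hα hα₁
  have hγT : 320 * Real.log (8 / α) ≤ γ ^ 2 * T := by
    rw [hT, ← div_le_iff₀' (by positivity), mul_div_right_comm]
    exact Nat.le_ceil _
  have hT_ge : 320 * Real.log (8 / α) ≤ T :=
    hγT.trans (mul_le_of_le_one_left (Nat.cast_nonneg T) (pow_le_one₀ hγ.le hγ₁))
  have hT_pos : 1 ≤ T := by exact_mod_cast (by linarith : (1 : ℝ) ≤ T)
  have hdm : d ≤ m := by
    rw [hm]
    exact_mod_cast (dim_le_sample_bound hd hγ hγ₁ hα hα₁ hβ hβ₁).trans (Nat.le_ceil _)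
  have hεn : 5 ^ T * ((5 ^ T) ^ 2 * d * Real.log (4 * T * 5 ^ T + 1) + Real.log (1 / β))
      ≤ ε * n := by
    refine (mul_log_add_log_le (one_le_pow₀ (by norm_num))
      (five_pow_pow_three_le hγ hγ₁ (by linarith)) (le_add_of_nonneg_left (by positivity))
      (four_mul_mul_five_pow_add_one_le hT_pos) hd hdm hβ hβ₁).trans ?_
    rw [← div_le_iff₀' hε]
    exact hn.trans_eq' (by ring)
  obtain ⟨A, Eval, h⟩ := exists_isMarginRelease (M := T) (P := 5 ^ T) hT_pos (by positivity) hd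
    hγ.le hβ hβ₁ hε (mod_cast sixteen_mul_four_pow_le hα hα₁ (by linarith))
    (exp_neg_le_half hα (by linarith)) (mod_cast hεn)
  exact ⟨1, one_pos, A, Eval, h.isProbabilityMeasure, fun D D' hDn hD'n hD hD' hDD' S _ =>
    h.differentiallyPrivate D ⟨hDn, hD⟩ D' ⟨hD'n, hD'⟩ hDD' S, h.accurate⟩

theorem stmt15 :
    ∃ c : ℝ, 0 < c ∧
      ∀ d : ℕ, 1 ≤ d → ∀ γ α β ε : ℝ,
        0 < γ → γ < 1 / 2 → 0 < α → α < 1 / 2 → 0 < β → β < 1 / 2 → 0 < ε → ε < 1 / 2 →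
      ∀ T m : ℕ,
        T = ⌈320 / γ ^ 2 * Real.log (8 / α)⌉₊ →
        m = ⌈16 / α ^ 2 * d * (Real.log (4 * Real.sqrt d / γ) + Real.log (1 / β))⌉₊ →
      ∀ n : ℕ,
        (n : ℝ) ≥ c * m / ε * (8 * Real.sqrt T / γ) ^ T *
          Real.log (2 * m * (8 * Real.sqrt T / γ) ^ T / β) →
      ∃ (k : ℕ), 0 < k ∧
      ∃ (A : Multiset (EuclideanSpace ℝ (Fin d)) → Measure (Fin k → ℝ))
        (Eval : (Fin k → ℝ) → EuclideanSpace ℝ (Fin d) → ℝ),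
        -- A(D) is a probability distribution on ℝ^k
        (∀ D, IsProbabilityMeasure (A D)) ∧
        -- A is ε-differentially private on size-n databases of unit vectors
        (∀ D D' : Multiset (EuclideanSpace ℝ (Fin d)), D.card = n → D'.card = n →
          (∀ x ∈ D, ‖x‖ = 1) → (∀ x ∈ D', ‖x‖ = 1) → Neighbor D D' →
          ∀ S : Set (Fin k → ℝ), MeasurableSet S →
            A D S ≤ ENNReal.ofReal (Real.exp ε) * A D' S) ∧
        -- with probability at least 1 − β over o = A(D), every unit vector y whose
        -- halfspace query has margin γ with respect to D is answered within α by Eval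
        (∀ D : Multiset (EuclideanSpace ℝ (Fin d)), D.card = n → (∀ x ∈ D, ‖x‖ = 1) →
          1 - ENNReal.ofReal β ≤
            A D {o | ∀ y : EuclideanSpace ℝ (Fin d), ‖y‖ = 1 →
              (∀ x ∈ D, γ ≤ |⟪x, y⟫|) → |Eval o y - hquery y D| ≤ α}) :=
  ⟨1, one_pos, fun d hd γ α β ε hγ hγ' hα hα' hβ hβ' hε _ T m hT hm n hn =>
    stmt15_general hd hγ (by linarith) hα (by linarith) hβ (by linarith) hε hT hm
      (by simpa only [one_mul] using hn)⟩
end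

section
/- Let X be a domain, n ≥ 1, ε > 0, and let A be a mechanism assigning to each size-n database over X a probability distribution on an output space R. Suppose A satisfies (ε, β)-distributional privacy with β < 1/(n+1)². Then for every pair of size-n databases D₁, D₂, each consisting of n distinct elements of X and such that D₂ can be obtained from D₁ by replacing a single element, and for every event E ⊆ R: Pr[A(D₁) ∈ E] ≤ e^ε · Pr[A(D₂) ∈ E]. -/
attribute [local instance] Classical.propDecidable

open MeasureTheory

/-!
If `D₁` and `D₂` differ in at most `k` elements, then `D₁ ∪ D₂` has at most `n + k` elements, so it
has at most `N = (n + k).choose k` subsets of size `n`. A pair drawn from `D₁ ∪ D₂` therefore equals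
`(D₁, D₂)` with probability at least `1 / N ^ 2`. Since `β < 1 / N ^ 2`, this pair cannot be among
the exceptional ones. For `k = 1` one has `N = n + 1`.
-/

section

open Finset

variable {α X : Type*}

theorem forall_mem_of_one_sub_mul_card_le_card_filter {s : Finset α} {p : α → Prop} {β : ℝ}
    (hβ : β < 1 / #s) (h : (1 - β) * #s ≤ #{a ∈ s | p a}) : ∀ a ∈ s, p a := by
  rcases s.eq_empty_or_nonempty with rfl | hs
  · simp
  have hs' : (0 : ℝ) < #s := by exact_mod_cast hs.card_pos
  have hsplit : (#{a ∈ s | p a} + #{a ∈ s | ¬ p a} : ℝ) = #s := by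
    exact_mod_cast s.card_filter_add_card_filter_not p
  have hβs : β * #s < 1 := (lt_div_iff₀ hs').1 hβ
  have hfail : (#{a ∈ s | ¬ p a} : ℝ) < 1 := by linarith
  have hfail_zero : #{a ∈ s | ¬ p a} = 0 := Nat.lt_one_iff.1 (by exact_mod_cast hfail)
  simpa [filter_eq_empty_iff] using hfail_zero

theorem card_powersetCard_union_le [DecidableEq X] {n k : ℕ} {s t : Finset X} (ht : #t ≤ n)
    (hst : #(s \ t) ≤ k) : #((s ∪ t).powersetCard n) ≤ (n + k).choose k := by
  have hunion : #(s ∪ t) ≤ n + k := by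
    rw [← card_sdiff_add_card]
    omega
  calc #((s ∪ t).powersetCard n) = (#(s ∪ t)).choose n := card_powersetCard n _
    _ ≤ (n + k).choose n := Nat.choose_le_choose n hunion
    _ = (n + k).choose k := Nat.choose_symm_add

/-- Distributional privacy with an arbitrary relation `r` on databases in place of
`ε`-indistinguishability of the outputs of a mechanism: two independent uniformly random
`n`-element subsets of any large enough finite set are related with probability at least `1 - β`.
The probability is expressed by counting pairs. -/
def IsDistributionallyPrivate (n : ℕ) (β : ℝ) (r : Finset X → Finset X → Prop) : Prop :=
  ∀ S : Finset X, n ≤ #S →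
    (1 - β) * #(S.powersetCard n) * #(S.powersetCard n) ≤
      #{p ∈ S.powersetCard n ×ˢ S.powersetCard n | r p.1 p.2}

theorem IsDistributionallyPrivate.rel_of_mem_powersetCard {n : ℕ} {β : ℝ}
    {r : Finset X → Finset X → Prop} (h : IsDistributionallyPrivate n β r) {S D₁ D₂ : Finset X}
    (hβ : β < 1 / (#(S.powersetCard n) : ℝ) ^ 2)
    (h₁ : D₁ ∈ S.powersetCard n) (h₂ : D₂ ∈ S.powersetCard n) : r D₁ D₂ := by
  have hnS : n ≤ #S := powersetCard_nonempty.1 ⟨D₁, h₁⟩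
  refine forall_mem_of_one_sub_mul_card_le_card_filter (p := fun p ↦ r p.1 p.2) (β := β) ?_ ?_
    (D₁, D₂) (mk_mem_product h₁ h₂)
  · simpa only [card_product, Nat.cast_mul, sq] using hβ
  · simpa only [card_product, Nat.cast_mul, mul_assoc] using h S hnS

theorem stmt16_general [DecidableEq X] {n k : ℕ} {β : ℝ} {r : Finset X → Finset X → Prop}
    (h : IsDistributionallyPrivate n β r) (hβ : β < 1 / ((n + k).choose k : ℝ) ^ 2)
    {D₁ D₂ : Finset X} (h₁ : #D₁ = n) (h₂ : #D₂ = n) (hk : #(D₁ \ D₂) ≤ k) : r D₁ D₂ := by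
  have hD₁ : D₁ ∈ (D₁ ∪ D₂).powersetCard n := mem_powersetCard.2 ⟨subset_union_left, h₁⟩
  have hD₂ : D₂ ∈ (D₁ ∪ D₂).powersetCard n := mem_powersetCard.2 ⟨subset_union_right, h₂⟩
  have hpos : 0 < #((D₁ ∪ D₂).powersetCard n) := card_pos.2 ⟨D₁, hD₁⟩
  have hle := card_powersetCard_union_le h₂.le hk
  refine h.rel_of_mem_powersetCard (hβ.trans_le ?_) hD₁ hD₂
  gcongr

end

theorem stmt16 {X : Type*} [DecidableEq X] {R : Type*} (n : ℕ) (hn : 1 ≤ n)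
    (ε β : ℝ) (hε : 0 < ε) (hβ : β < 1 / ((n : ℝ) + 1) ^ 2)
    (A : Multiset X → @Measure R ⊤)
    -- A(D) is a probability distribution on R
    (hprob : ∀ D : Multiset X, D.card = n → @IsProbabilityMeasure R ⊤ (A D))
    -- A satisfies (ε, β)-distributional privacy: for every S ⊆ X with |S| ≥ n, when two
    -- size-n databases are drawn uniformly (without replacement, i.e. as n-element subsets)
    -- and independently from S, with probability at least 1 − β the pair satisfies the
    -- ε-indistinguishability condition for all events
    (hdist : ∀ S : Finset X, n ≤ S.card →
      (1 - β) * ((S.powersetCard n).card : ℝ) * ((S.powersetCard n).card : ℝ) ≤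
        (((S.powersetCard n ×ˢ S.powersetCard n).filter (fun p =>
          ∀ E : Set R,
            A p.1.val E ≤ ENNReal.ofReal (Real.exp ε) * A p.2.val E)).card : ℝ)) :
    -- conclusion: ε-differential privacy for databases of n distinct elements that differ
    -- by the replacement of a single element
    ∀ D₁ D₂ : Finset X, D₁.card = n → D₂.card = n → (D₁ \ D₂).card ≤ 1 →
      ∀ E : Set R, A D₁.val E ≤ ENNReal.ofReal (Real.exp ε) * A D₂.val E := by
  intro D₁ D₂ h₁ h₂ hD
  exact stmt16_general (k := 1) (r := fun D D' ↦ ∀ E : Set R,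
    A D.val E ≤ ENNReal.ofReal (Real.exp ε) * A D'.val E) hdist (by simpa using hβ) h₁ h₂ hD
end
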